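/- (Lemma 5) The nonnegative-slope digital segment system generated by the waterline assignment satisfies all five properties (S1)–(S5), i.e., the waterline example is a CDS. -/

import Mathlib

open scoped Classical

/-- Points of the digital plane. -/
abbrev Pt : Type := ℤ × ℤ

/-- `q` lies in the closed first quadrant of `p`. -/
def Quad1 (p q : Pt) : Prop := p.1 ≤ q.1 ∧ p.2 ≤ q.2

/-- The number of elements `y` of the finite set `J` with `y ≺ x` or `y = x`. -/
noncomputable def rankLE (lt : ℤ → ℤ → Prop) (J : Finset ℤ) (x : ℤ) : ℤ :=
  ((J.filter fun y => lt y x ∨ y = x).card : ℤ)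

/-- `x` is among the `k` smallest elements of `J` with respect to the linear order `lt`. -/
def AmongSmallest (lt : ℤ → ℤ → Prop) (J : Finset ℤ) (k x : ℤ) : Prop :=
  x ∈ J ∧ rankLE lt J x ≤ k

/-- The interval `I(p,q) = [p.x+p.y, q.x+q.y-1]`. -/
noncomputable def Ival (p q : Pt) : Finset ℤ := Finset.Icc (p.1 + p.2) (q.1 + q.2 - 1)

/-- Membership in `H(lt,p,q)`: the `q.x - p.x` smallest elements of `I(p,q)` w.r.t. `lt`. -/
def Hmem (lt : ℤ → ℤ → Prop) (p q : Pt) (a : ℤ) : Prop :=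
  AmongSmallest lt (Ival p q) (q.1 - p.1) a

/-- The digital segment `R(lt,p,q)` for `q ∈ Q¹_p`, generated by the linear order `lt`. -/
noncomputable def seg (lt : ℤ → ℤ → Prop) (p q : Pt) : Set Pt :=
  {r : Pt | p.1 ≤ r.1 ∧ r.1 ≤ q.1 ∧ p.2 ≤ r.2 ∧ r.2 ≤ q.2 ∧
    p.1 + p.2 ≤ r.1 + r.2 ∧ r.1 + r.2 ≤ q.1 + q.2 ∧
    r.1 - p.1 =
      (((Finset.Icc (p.1 + p.2) (r.1 + r.2 - 1)).filter fun a => Hmem lt p q a).card : ℤ)}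

/-- `(t₁,t₂)` is a witness to the violation of (S3) for the pair of sets `(S,S')`. -/
def Witness (S S' : Set Pt) (t₁ t₂ : Pt) : Prop :=
  t₁ ∈ S ∧ t₁ ∈ S' ∧ t₂ ∈ S ∧ t₂ ∈ S' ∧
  t₁.1 + t₁.2 < t₂.1 + t₂.2 ∧
  ((t₁.1 + 1, t₁.2) : Pt) ∈ S ∧ ((t₁.1, t₁.2 + 1) : Pt) ∈ S' ∧
  ((t₂.1, t₂.2 - 1) : Pt) ∈ S ∧ ((t₂.1 - 1, t₂.2) : Pt) ∈ S'

/-- `a ≠ b` form a bad pair for `(lt,p)` and `(lt',p')`, where `p.x ≤ p'.x`. -/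
def BadPair (lt lt' : ℤ → ℤ → Prop) (p p' : Pt) (a b : ℤ) : Prop :=
  a ≠ b ∧ ∃ C ℓ : ℤ, p.1 + p.2 ≤ C ∧ p'.1 + p'.2 ≤ C ∧
    a ∈ Finset.Icc (p.1 + p.2) (C - 1) ∧ b ∈ Finset.Icc (p.1 + p.2) (C - 1) ∧
    a ∈ Finset.Icc (p'.1 + p'.2) (C - 1) ∧ b ∈ Finset.Icc (p'.1 + p'.2) (C - 1) ∧
    AmongSmallest lt (Finset.Icc (p.1 + p.2) (C - 1)) ℓ a ∧
    ¬ AmongSmallest lt (Finset.Icc (p.1 + p.2) (C - 1)) ℓ b ∧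
    AmongSmallest lt' (Finset.Icc (p'.1 + p'.2) (C - 1)) (ℓ - (p'.1 - p.1)) b ∧
    ¬ AmongSmallest lt' (Finset.Icc (p'.1 + p'.2) (C - 1)) (ℓ - (p'.1 - p.1)) a

/-- Bad pair for arbitrary `p, p'`: for `p.x > p'.x` the roles of `p` and `p'` are exchanged. -/
def BadPairSym (lt lt' : ℤ → ℤ → Prop) (p p' : Pt) (a b : ℤ) : Prop :=
  (p.1 ≤ p'.1 ∧ BadPair lt lt' p p' a b) ∨ (p'.1 ≤ p.1 ∧ BadPair lt' lt p' p a b)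

/-- Adjacency in the unit grid graph on `ℤ²`. -/
def GridAdj (u v : Pt) : Prop := |u.1 - v.1| + |u.2 - v.2| = 1

/-- `S` is the vertex set of a path from `p` to `q` in the unit grid graph. -/
def IsGridPath (S : Set Pt) (p q : Pt) : Prop :=
  ∃ (n : ℕ) (f : ℕ → Pt), f 0 = p ∧ f n = q ∧
    (∀ i, i < n → GridAdj (f i) (f (i + 1))) ∧
    (∀ i j, i ≤ n → j ≤ n → f i = f j → i = j) ∧
    S = {r : Pt | ∃ i, i ≤ n ∧ f i = r}

/-- The pair `p, q` has nonnegative slope. -/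
def NonnegPair (p q : Pt) : Prop := (p.1 ≤ q.1 ∧ p.2 ≤ q.2) ∨ (q.1 ≤ p.1 ∧ q.2 ≤ p.2)

/-- A nonnegative-slope digital segment system `R` is a CDS: properties (S1)-(S5). -/
def IsCDS (R : Pt → Pt → Set Pt) : Prop :=
  ∀ p q : Pt, NonnegPair p q →
    IsGridPath (R p q) p q ∧
    R p q = R q p ∧
    (∀ r s : Pt, r ∈ R p q → s ∈ R p q → NonnegPair r s → R r s ⊆ R p q) ∧
    (∃ r : Pt, r ∉ R p q ∧ NonnegPair p r ∧ R p q ⊆ R p r) ∧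
    (p.1 = q.1 → ∀ r ∈ R p q, r.1 = p.1) ∧
    (p.2 = q.2 → ∀ r ∈ R p q, r.2 = p.2)

/-- The nonnegative-slope digital segment system generated by an assignment of
linear orders to the points of `ℤ²`. -/
noncomputable def genR (ord : Pt → ℤ → ℤ → Prop) (p q : Pt) : Set Pt :=
  if p.1 ≤ q.1 ∧ p.2 ≤ q.2 then seg (ord p) p q else seg (ord q) q p

/-- The orders `lt` at `p` and `lt'` at `p'` are in agreement. -/
def Agree (p p' : Pt) (lt lt' : ℤ → ℤ → Prop) : Prop :=
  ∀ a b : ℤ, max p.1 p'.1 + max p.2 p'.2 ≤ a → max p.1 p'.1 + max p.2 p'.2 ≤ b →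
    (lt a b ↔ lt' a b)

/-- Two digital segments are smooth: the antidiagonal distance function is
monotonically nondecreasing or nonincreasing on its domain. -/
def SmoothPair (S S' : Set Pt) : Prop :=
  (∀ r₁ s₁ r₂ s₂ : Pt, r₁ ∈ S → s₁ ∈ S' → r₂ ∈ S → s₂ ∈ S' →
      r₁.1 + r₁.2 = s₁.1 + s₁.2 → r₂.1 + r₂.2 = s₂.1 + s₂.2 →
      r₁.1 + r₁.2 ≤ r₂.1 + r₂.2 → r₁.1 - s₁.1 ≤ r₂.1 - s₂.1) ∨
  (∀ r₁ s₁ r₂ s₂ : Pt, r₁ ∈ S → s₁ ∈ S' → r₂ ∈ S → s₂ ∈ S' →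
      r₁.1 + r₁.2 = s₁.1 + s₁.2 → r₂.1 + r₂.2 = s₂.1 + s₂.2 →
      r₁.1 + r₁.2 ≤ r₂.1 + r₂.2 → r₂.1 - s₂.1 ≤ r₁.1 - s₁.1)

/-- The waterline assignment of linear orders. -/
def waterOrd (p : Pt) : ℤ → ℤ → Prop := fun a b =>
  if 0 ≤ p.2 then a < b
  else (p.1 ≤ a ∧ p.1 ≤ b ∧ a < b) ∨ (p.1 ≤ a ∧ b < p.1) ∨ (a < p.1 ∧ b < p.1 ∧ b < a)

/-- `p₃` has a conflicting priority with respect to `(lt,p)` and `(lt',p')`. -/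
def ConflictPriority (lt lt' : ℤ → ℤ → Prop) (p p' p₃ : Pt) : Prop :=
  ∃ a b : ℤ, a ∈ Ival p p₃ ∧ a ∈ Ival p' p₃ ∧ b ∈ Ival p p₃ ∧ b ∈ Ival p' p₃ ∧
    Hmem lt p p₃ b ∧ ¬ Hmem lt p p₃ a ∧ Hmem lt' p' p₃ a ∧ ¬ Hmem lt' p' p₃ b


/-- The height of the horizontal part of the segment from `p` to `q`. -/
def lvl (p q : Pt) : ℤ := max p.2 (min q.2 0)

lemma Hmem_iff (p q : Pt) (h : Quad1 p q) (a : ℤ) :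
    Hmem (waterOrd p) p q a ↔ p.1 + lvl p q ≤ a ∧ a < q.1 + lvl p q := by
  obtain ⟨h1, h2⟩ := h
  have hl : lvl p q = max p.2 (min q.2 0) := rfl
  generalize lvl p q = l at hl
  have hc : ((Finset.Icc (p.1 + l) (q.1 + l - 1)).card : ℤ) = q.1 - p.1 := by
    rw [Int.card_Icc]; omega
  unfold Hmem AmongSmallest rankLE Ival
  constructor
  · rintro ⟨ha, hr⟩
    rw [Finset.mem_Icc] at ha
    by_contra hn
    have hsub : insert a (Finset.Icc (p.1 + l) (q.1 + l - 1)) ⊆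
        (Finset.Icc (p.1 + p.2) (q.1 + q.2 - 1)).filter
          (fun y => waterOrd p y a ∨ y = a) := by
      intro y hy
      rw [Finset.mem_insert, Finset.mem_Icc] at hy
      rw [Finset.mem_filter, Finset.mem_Icc]
      rcases hy with rfl | hy
      · exact ⟨ha, Or.inr rfl⟩
      · refine ⟨by omega, Or.inl ?_⟩
        unfold waterOrd
        split_ifs <;> omega
    have := Finset.card_le_card hsub
    rw [Finset.card_insert_of_notMem (by rw [Finset.mem_Icc]; omega)] at this
    omega
  · intro ha
    refine ⟨by rw [Finset.mem_Icc]; omega, ?_⟩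
    rw [← hc]
    refine Int.ofNat_le.mpr (Finset.card_le_card ?_)
    intro y hy
    rw [Finset.mem_filter, Finset.mem_Icc] at hy
    rw [Finset.mem_Icc]
    obtain ⟨hy1, hy2⟩ := hy
    unfold waterOrd at hy2
    split_ifs at hy2 <;> omega

lemma mem_seg_iff (p q r : Pt) (h : Quad1 p q) :
    r ∈ seg (waterOrd p) p q ↔ p.1 ≤ r.1 ∧ r.1 ≤ q.1 ∧ p.2 ≤ r.2 ∧ r.2 ≤ q.2 ∧
      r.1 - p.1 = max 0 (min (r.1 + r.2 - p.1 - lvl p q) (q.1 - p.1)) := by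
  have hl : lvl p q = max p.2 (min q.2 0) := rfl
  have e : ((Finset.Icc (p.1 + p.2) (r.1 + r.2 - 1)).filter
      fun a => Hmem (waterOrd p) p q a) =
      Finset.Icc (p.1 + lvl p q) (min (r.1 + r.2 - 1) (q.1 + lvl p q - 1)) := by
    ext a
    rw [Finset.mem_filter, Hmem_iff p q h, Finset.mem_Icc, Finset.mem_Icc]
    omega
  obtain ⟨h1, h2⟩ := h
  unfold seg
  rw [Set.mem_ofPred_eq, e, Int.card_Icc]
  omega

lemma genR_of (p q : Pt) (h : Quad1 p q) : genR waterOrd p q = seg (waterOrd p) p q :=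
  if_pos h

lemma genR_symm (p q : Pt) (h : NonnegPair p q) : genR waterOrd p q = genR waterOrd q p := by
  unfold genR
  unfold NonnegPair at h
  split_ifs with h1 h2 h2
  · have : p = q := Prod.ext (by omega) (by omega)
    rw [this]
  · rfl
  · rfl
  · exfalso; tauto

lemma path_symm {S : Set Pt} {p q : Pt} (h : IsGridPath S p q) : IsGridPath S q p := by
  obtain ⟨n, f, h0, hn, ha, hi, rfl⟩ := h
  refine ⟨n, fun i => f (n - i), by simpa using hn, by simpa using h0, ?_, ?_, ?_⟩
  · intro i hin
    have := ha (n - (i + 1)) (by omega)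
    rw [show n - (i + 1) + 1 = n - i by omega] at this
    unfold GridAdj at *
    rw [abs_sub_comm, abs_sub_comm (f (n - i)).2]
    exact this
  · intro i j h1 h2 h3
    have := hi _ _ (by omega) (by omega) h3
    omega
  · ext r
    constructor
    · rintro ⟨i, h1, h2⟩
      exact ⟨n - i, by omega, by simp only; rw [show n - (n - i) = i by omega]; exact h2⟩
    · rintro ⟨i, h1, h2⟩
      exact ⟨n - i, by omega, h2⟩

lemma path_seg (p q : Pt) (h : Quad1 p q) : IsGridPath (seg (waterOrd p) p q) p q := by
  have hl : lvl p q = max p.2 (min q.2 0) := rfl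
  have hm := fun r => mem_seg_iff p q r h
  obtain ⟨h1, h2⟩ := h
  generalize lvl p q = l at *
  refine ⟨(q.1 + q.2 - p.1 - p.2).toNat, fun i =>
    (p.1 + max 0 (min (p.2 + i - l) (q.1 - p.1)),
     p.2 + i - max 0 (min (p.2 + i - l) (q.1 - p.1))), ?_, ?_, ?_, ?_, ?_⟩
  · ext <;> simp only <;> omega
  · ext <;> simp only <;> omega
  · intro i hi
    unfold GridAdj
    simp only
    push_cast [abs_eq_max_neg]
    omega
  · intro i j hi hj hij
    have e1 := congrArg Prod.fst hij
    have e2 := congrArg Prod.snd hij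
    simp only at e1 e2
    omega
  · ext r
    rw [hm, Set.mem_ofPred_eq]
    constructor
    · intro hr
      refine ⟨(r.1 + r.2 - p.1 - p.2).toNat, by omega, ?_⟩
      ext <;> simp only <;> omega
    · rintro ⟨i, hi, rfl⟩
      simp only
      omega

lemma seg_sub (p q r s : Pt) (h : Quad1 p q) (hr : r ∈ seg (waterOrd p) p q)
    (hs : s ∈ seg (waterOrd p) p q) (hrs : Quad1 r s) :
    seg (waterOrd r) r s ⊆ seg (waterOrd p) p q := by
  intro t ht
  rw [mem_seg_iff _ _ _ h] at hr hs ⊢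
  rw [mem_seg_iff _ _ _ hrs] at ht
  unfold lvl at *
  obtain ⟨h1, h2⟩ := h
  obtain ⟨h3, h4⟩ := hrs
  omega

lemma seg_conv (p q r s : Pt) (h : Quad1 p q) (hr : r ∈ genR waterOrd p q)
    (hs : s ∈ genR waterOrd p q) (hrs : NonnegPair r s) :
    genR waterOrd r s ⊆ genR waterOrd p q := by
  rw [genR_of p q h] at *
  rcases id hrs with h1 | h1
  · rw [genR_of r s h1]; exact seg_sub p q r s h hr hs h1
  · rw [genR_symm r s hrs, genR_of s r h1]; exact seg_sub p q s r h hs hr h1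

lemma ext_up (p q : Pt) (h : Quad1 p q) :
    ∃ r : Pt, r ∉ seg (waterOrd p) p q ∧ Quad1 p r ∧
      seg (waterOrd p) p q ⊆ seg (waterOrd p) p r := by
  have key : ∀ r : Pt, Quad1 q r → q ≠ r → lvl p r = lvl p q →
      (r.1 = q.1 ∨ (r.2 = q.2 ∧ lvl p q = q.2)) →
      r ∉ seg (waterOrd p) p q ∧ Quad1 p r ∧
      seg (waterOrd p) p q ⊆ seg (waterOrd p) p r := by
    intro r hq hne hl hor
    have hpr : Quad1 p r := ⟨h.1.trans hq.1, h.2.trans hq.2⟩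
    refine ⟨?_, hpr, ?_⟩
    · intro hc
      rw [mem_seg_iff _ _ _ h] at hc
      obtain ⟨h1, h2⟩ := hq
      exact hne (Prod.ext (by omega) (by omega))
    · intro t ht
      rw [mem_seg_iff _ _ _ h] at ht
      rw [mem_seg_iff _ _ _ hpr, hl]
      obtain ⟨h1, h2⟩ := hq
      obtain ⟨h3, h4⟩ := h
      omega
  obtain ⟨h1, h2⟩ := h
  by_cases hc : p.2 < 0 ∧ q.2 < 0
  · refine ⟨(q.1 + 1, q.2), key _ ⟨by simp, by simp⟩ ?_ rfl ?_⟩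
    · intro e; have := congrArg Prod.fst e; simp at this
    · right; refine ⟨rfl, ?_⟩; unfold lvl; omega
  · refine ⟨(q.1, q.2 + 1), key _ ⟨by simp, by simp⟩ ?_ ?_ (Or.inl rfl)⟩
    · intro e; have := congrArg Prod.snd e; simp at this
    · unfold lvl; simp only; omega

lemma ext_down (p q : Pt) (h : Quad1 p q) :
    ∃ r : Pt, r ∉ seg (waterOrd p) p q ∧ Quad1 r q ∧
      seg (waterOrd p) p q ⊆ seg (waterOrd r) r q := by
  have key : ∀ r : Pt, Quad1 r p → r ≠ p → lvl r q = lvl p q →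
      (r.1 = p.1 ∨ (r.2 = p.2 ∧ lvl p q = p.2)) →
      r ∉ seg (waterOrd p) p q ∧ Quad1 r q ∧
      seg (waterOrd p) p q ⊆ seg (waterOrd r) r q := by
    intro r hq hne hl hor
    have hpr : Quad1 r q := ⟨hq.1.trans h.1, hq.2.trans h.2⟩
    refine ⟨?_, hpr, ?_⟩
    · intro hc
      rw [mem_seg_iff _ _ _ h] at hc
      obtain ⟨h1, h2⟩ := hq
      exact hne (Prod.ext (by omega) (by omega))
    · intro t ht
      rw [mem_seg_iff _ _ _ h] at ht
      rw [mem_seg_iff _ _ _ hpr, hl]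
      obtain ⟨h1, h2⟩ := hq
      obtain ⟨h3, h4⟩ := h
      omega
  obtain ⟨h1, h2⟩ := h
  by_cases hc : 0 < p.2
  · refine ⟨(p.1 - 1, p.2), key _ ⟨by simp, by simp⟩ ?_ rfl ?_⟩
    · intro e; have := congrArg Prod.fst e; simp at this
    · right; refine ⟨rfl, ?_⟩; unfold lvl; omega
  · refine ⟨(p.1, p.2 - 1), key _ ⟨by simp, by simp⟩ ?_ ?_ (Or.inl rfl)⟩
    · intro e; have := congrArg Prod.snd e; simp at this
    · unfold lvl; simp only; omega

/-- Lemma 5: the waterline example is a CDS. -/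
theorem statement14 : IsCDS (genR waterOrd) := by
  intro p q hpq
  rcases id hpq with h | h
  · refine ⟨?_, genR_symm p q hpq, fun r s => seg_conv p q r s h, ?_, ?_, ?_⟩
    · rw [genR_of p q h]; exact path_seg p q h
    · obtain ⟨r, h1, h2, h3⟩ := ext_up p q h
      refine ⟨r, ?_, Or.inl h2, ?_⟩
      · rwa [genR_of p q h]
      · rwa [genR_of p q h, genR_of p r h2]
    · intro e r hr
      rw [genR_of p q h, mem_seg_iff p q r h] at hr
      omega
    · intro e r hr
      rw [genR_of p q h, mem_seg_iff p q r h] at hr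
      omega
  · have e0 := genR_symm p q hpq
    have e1 := genR_of q p h
    refine ⟨?_, e0, ?_, ?_, ?_, ?_⟩
    · rw [e0, e1]; exact path_symm (path_seg q p h)
    · rw [e0]; exact fun r s => seg_conv q p r s h
    · obtain ⟨r, h1, h2, h3⟩ := ext_down q p h
      refine ⟨r, ?_, Or.inr h2, ?_⟩
      · rwa [e0, e1]
      · rwa [e0, e1, genR_symm p r (Or.inr h2), genR_of r p h2]
    · intro e r hr
      rw [e0, e1, mem_seg_iff q p r h] at hr
      omega
    · intro e r hr
      rw [e0, e1, mem_seg_iff q p r h] at hr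
      omega
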